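/- Let 0<q<1 and 0<α<1. Then for every real z with 0<z<(1−q)^{−α}, one has 1/(1+Γ_q(1−α)·z) ≤ e_{α,1}(−z;q). -/

import Mathlib

open scoped BigOperators

/-- The infinite q-Pochhammer symbol `(a;q)_∞ = ∏_{j=0}^∞ (1 - q^j a)`. -/
noncomputable def qPochInf (q a : ℝ) : ℝ := ∏' j : ℕ, (1 - q ^ j * a)

/-- The q-gamma function `Γ_q(x) = ((q;q)_∞/(q^x;q)_∞)·(1-q)^{1-x}`. -/
noncomputable def qGamma (q x : ℝ) : ℝ :=
  (qPochInf q q / qPochInf q (q ^ x)) * (1 - q) ^ (1 - x)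

/-- The q-Mittag-Leffler function `e_{α,β}(z;q) = ∑_{k=0}^∞ z^k/Γ_q(αk+β)`. -/
noncomputable def qML (q α β z : ℝ) : ℝ := ∑' k : ℕ, z ^ k / qGamma q (α * k + β)

/-!
The function `e_{α,β}` is a solution of a fractional `q`-difference equation: the weights
`W n = (1-q)^{-α} (q^{-α};q)_n / (q;q)_n` of the `q`-derivative of order `α` satisfy
`∑ W n q^{ns} = Γ_q(s) / Γ_q(s-α)` by the `q`-binomial theorem, so that `f(x) = e_{α,β}(-x)` obeys
`∑ W n q^{nβ} f(q^{nα} x) = 1/Γ_q(β-α) - x f(x)`. Only `W 0` is positive when `0 ≤ α ≤ 1`. Hence at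
a minimum `x₀` of `f` over `[0, z]` the left side is at most `(∑ W n q^{nβ}) f(x₀)`, that is,
`f(x₀) Γ_q(β)/Γ_q(β-α)`, and this bounds `f(x₀)`, and with it `f(z)`, from below.
-/

open Filter Finset Metric Set Topology

section PowerSeries

variable {c : ℕ → ℝ} {R : ℝ}

lemma continuousOn_tsum_mul_pow (hc : ∀ x, |x| < R → Summable fun k => c k * x ^ k) :
    ContinuousOn (fun x => ∑' k, c k * x ^ k) (ball 0 R) := by
  intro x hx
  obtain ⟨r, hxr, hrR⟩ := exists_between (mem_ball_zero_iff.1 hx)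
  have hr : |r| = r := abs_of_nonneg ((norm_nonneg x).trans hxr.le)
  have hcont : ContinuousOn (fun x => ∑' k, c k * x ^ k) (closedBall 0 r) := by
    refine continuousOn_tsum (fun k => by fun_prop) (hc r (hr.trans_lt hrR)).abs fun k y hy => ?_
    rw [norm_mul, norm_pow, abs_mul, abs_pow, hr, Real.norm_eq_abs (c k)]
    gcongr
    exact mem_closedBall_zero_iff.1 hy
  have hxr' : closedBall 0 r ∈ 𝓝 x := closedBall_mem_nhds_of_mem (mem_ball_zero_iff.2 hxr)
  exact (hcont.continuousAt hxr').continuousWithinAt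

lemma hasSum_mul_tsum_dilate {B : ℕ → ℝ} {p x : ℝ} (hB : Summable B)
    (hc : Summable fun k => c k * x ^ k) (hp : |p| ≤ 1) :
    HasSum (fun n => B n * ∑' k, c k * (p ^ n * x) ^ k)
      (∑' k, c k * (∑' n, B n * (p ^ k) ^ n) * x ^ k) := by
  let F : ℕ × ℕ → ℝ := fun nk => B nk.1 * (c nk.2 * (p ^ nk.1 * x) ^ nk.2)
  have hF : Summable F := by
    refine .of_norm_bounded
      (hB.abs.mul_of_nonneg hc.abs (fun _ => abs_nonneg _) fun _ => abs_nonneg _) fun nk => ?_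
    have hpow : |p ^ nk.1 * x| ≤ |x| := by
      rw [abs_mul, abs_pow]
      exact mul_le_of_le_one_left (abs_nonneg x) (pow_le_one₀ (abs_nonneg p) hp)
    rw [Real.norm_eq_abs, abs_mul, abs_mul, abs_mul (c nk.2), abs_pow, abs_pow x]
    gcongr
  have hsum := hF.hasSum.prod_fiberwise fun n => (hF.prod_factor n).hasSum
  have hswap : ∑' nk, F nk = ∑' k, c k * (∑' n, B n * (p ^ k) ^ n) * x ^ k := by
    rw [hF.tsum_prod, ← hF.tsum_comm]
    refine tsum_congr fun k => ?_
    rw [← tsum_mul_left, ← tsum_mul_right]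
    exact tsum_congr fun n => by simp only [F]; ring
  rw [hswap] at hsum
  simpa only [F, tsum_mul_left] using hsum

end PowerSeries

section QPochhammer

/-- The finite `q`-Pochhammer symbol `(a;q)_n`. -/
def qPoch (q a : ℝ) (n : ℕ) : ℝ := ∏ j ∈ range n, (1 - q ^ j * a)

variable {q a : ℝ}

lemma qPoch_succ (q a : ℝ) (n : ℕ) : qPoch q a (n + 1) = qPoch q a n * (1 - q ^ n * a) :=
  prod_range_succ _ n

lemma one_sub_pow_mul_pos (hq : |q| ≤ 1) (ha : |a| < 1) (j : ℕ) : 0 < 1 - q ^ j * a := by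
  have hlt : |q ^ j * a| < 1 := by
    rw [abs_mul, abs_pow]
    exact (mul_le_of_le_one_left (abs_nonneg a) (pow_le_one₀ (abs_nonneg q) hq)).trans_lt ha
  exact sub_pos.2 (abs_lt.1 hlt).2

lemma qPoch_pos (hq : |q| ≤ 1) (ha : |a| < 1) (n : ℕ) : 0 < qPoch q a n :=
  prod_pos fun j _ => one_sub_pow_mul_pos hq ha j

lemma summable_norm_neg_pow_mul (hq : |q| < 1) (a : ℝ) : Summable fun j : ℕ => ‖-(q ^ j * a)‖ := by
  simpa only [norm_neg] using ((summable_geometric_of_abs_lt_one hq).mul_right a).norm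

lemma tendsto_qPoch_qPochInf (hq : |q| < 1) (a : ℝ) :
    Tendsto (qPoch q a) atTop (𝓝 (qPochInf q a)) := by
  have hmul := multipliable_one_add_of_summable (summable_norm_neg_pow_mul hq a)
  simp only [← sub_eq_add_neg] at hmul
  exact hmul.tendsto_prod_tprod_nat

lemma qPochInf_pos (hq : |q| < 1) (ha : |a| < 1) : 0 < qPochInf q a := by
  refine (ge_of_tendsto' (tendsto_qPoch_qPochInf hq a) fun n =>
    (qPoch_pos hq.le ha n).le).lt_of_ne' ?_
  have hne := tprod_one_add_ne_zero_of_summable (f := fun j : ℕ => -(q ^ j * a))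
    (fun j => (one_sub_pow_mul_pos hq.le ha j).ne') (summable_norm_neg_pow_mul hq a)
  simpa only [qPochInf, sub_eq_add_neg] using hne

lemma qPochInf_le_one (hq0 : 0 ≤ q) (hq1 : q < 1) (ha0 : 0 ≤ a) (ha1 : a < 1) :
    qPochInf q a ≤ 1 := by
  have hq : |q| < 1 := by rwa [abs_of_nonneg hq0]
  have ha : |a| < 1 := by rwa [abs_of_nonneg ha0]
  exact le_of_tendsto' (tendsto_qPoch_qPochInf hq a) fun n =>
    prod_le_one (fun j _ => (one_sub_pow_mul_pos hq.le ha j).le)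
      fun j _ => sub_le_self 1 (by positivity)

end QPochhammer

section QBinomialTheorem

/-- The coefficient `(a;q)_n / (q;q)_n` of `x ^ n` in the `q`-binomial series. -/
noncomputable def qBinomCoeff (q a : ℝ) (n : ℕ) : ℝ := qPoch q a n / qPoch q q n

variable {q x : ℝ}

lemma qBinomCoeff_zero (q a : ℝ) : qBinomCoeff q a 0 = 1 := by
  simp [qBinomCoeff, qPoch]

lemma qBinomCoeff_succ (q a : ℝ) (n : ℕ) :
    qBinomCoeff q a (n + 1) = (1 - q ^ n * a) / (1 - q ^ (n + 1)) * qBinomCoeff q a n := by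
  rw [qBinomCoeff, qBinomCoeff, qPoch_succ, qPoch_succ, ← pow_succ, mul_div_mul_comm, mul_comm]

lemma summable_qBinomCoeff_mul_pow (hq : |q| < 1) (a : ℝ) (hx : |x| < 1) :
    Summable fun n => qBinomCoeff q a n * x ^ n := by
  obtain ⟨r, hxr, hr⟩ := exists_between hx
  refine summable_of_ratio_norm_eventually_le hr ?_
  have hqn : Tendsto (fun n : ℕ => q ^ n) atTop (𝓝 0) :=
    tendsto_pow_atTop_nhds_zero_of_abs_lt_one hq
  have hratio : Tendsto (fun n : ℕ => |(1 - q ^ n * a) / (1 - q ^ (n + 1)) * x|) atTop (𝓝 |x|) := by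
    have hnum := (hqn.mul_const a).const_sub 1
    have hden := ((tendsto_add_atTop_iff_nat 1).2 hqn).const_sub 1
    simpa using ((hnum.div hden (by norm_num)).mul_const x).abs
  filter_upwards [hratio.eventually_le_const hxr] with n hn
  have hstep : qBinomCoeff q a (n + 1) * x ^ (n + 1)
      = (1 - q ^ n * a) / (1 - q ^ (n + 1)) * x * (qBinomCoeff q a n * x ^ n) := by
    rw [qBinomCoeff_succ]
    ring
  rw [hstep, norm_mul]
  gcongr
  exact hn

lemma one_sub_mul_tsum_qBinomCoeff (hq : |q| < 1) (a : ℝ) (hx : |x| < 1) :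
    (1 - x) * ∑' n, qBinomCoeff q a n * x ^ n
      = (1 - a * x) * ∑' n, qBinomCoeff q a n * (q * x) ^ n := by
  have hqx : |q * x| < 1 := by
    rw [abs_mul]
    exact mul_lt_one_of_nonneg_of_lt_one_left (abs_nonneg q) hq hx.le
  have hs := summable_qBinomCoeff_mul_pow hq a hx
  have hsq := summable_qBinomCoeff_mul_pow hq a hqx
  have hdiff : ∑' n, qBinomCoeff q a n * x ^ n - ∑' n, qBinomCoeff q a n * (q * x) ^ n
      = x * ∑' n, qBinomCoeff q a n * x ^ n - a * x * ∑' n, qBinomCoeff q a n * (q * x) ^ n := by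
    rw [← hs.tsum_sub hsq, (hs.sub hsq).tsum_eq_zero_add, ← tsum_mul_left, ← tsum_mul_left,
      ← (hs.mul_left _).tsum_sub (hsq.mul_left _)]
    simp only [pow_zero, sub_self, zero_add]
    refine tsum_congr fun n => ?_
    have hden : 1 - q ^ (n + 1) ≠ 0 := by
      simpa only [pow_succ] using (one_sub_pow_mul_pos hq.le hq n).ne'
    rw [qBinomCoeff_succ]
    field_simp
    ring
  linear_combination hdiff

lemma qPoch_mul_tsum_qBinomCoeff (hq : |q| < 1) (a : ℝ) (hx : |x| < 1) (N : ℕ) :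
    qPoch q x N * ∑' n, qBinomCoeff q a n * x ^ n
      = qPoch q (a * x) N * ∑' n, qBinomCoeff q a n * (q ^ N * x) ^ n := by
  induction N with
  | zero => simp [qPoch]
  | succ N ih =>
    have hN : |q ^ N * x| < 1 := by
      rw [abs_mul, abs_pow]
      exact (mul_le_of_le_one_left (abs_nonneg x) (pow_le_one₀ (abs_nonneg q) hq.le)).trans_lt hx
    have hstep := one_sub_mul_tsum_qBinomCoeff hq a hN
    rw [qPoch_succ, qPoch_succ, pow_succ', mul_assoc q]
    linear_combination (1 - q ^ N * x) * ih + qPoch q (a * x) N * hstep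

theorem hasSum_qBinomCoeff_mul_pow (hq : |q| < 1) (a : ℝ) (hx : |x| < 1) :
    HasSum (fun n => qBinomCoeff q a n * x ^ n) (qPochInf q (a * x) / qPochInf q x) := by
  have hcont : ContinuousAt (fun y => ∑' n, qBinomCoeff q a n * y ^ n) 0 :=
    (continuousOn_tsum_mul_pow fun _ => summable_qBinomCoeff_mul_pow hq a).continuousAt
      (ball_mem_nhds 0 one_pos)
  have hzero : ∑' n, qBinomCoeff q a n * (0 : ℝ) ^ n = 1 := by
    rw [tsum_eq_single 0 fun n hn => by rw [zero_pow hn, mul_zero], qBinomCoeff_zero, pow_zero,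
      mul_one]
  have hdil : Tendsto (fun N : ℕ => q ^ N * x) atTop (𝓝 0) := by
    simpa using (tendsto_pow_atTop_nhds_zero_of_abs_lt_one hq).mul_const x
  have hlim : qPochInf q x * ∑' n, qBinomCoeff q a n * x ^ n = qPochInf q (a * x) := by
    have hleft := (tendsto_qPoch_qPochInf hq x).mul_const (∑' n, qBinomCoeff q a n * x ^ n)
    have hright := (tendsto_qPoch_qPochInf hq (a * x)).mul (hcont.tendsto.comp hdil)
    rw [hzero, mul_one] at hright
    exact tendsto_nhds_unique (hleft.congr (qPoch_mul_tsum_qBinomCoeff hq a hx)) hright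
  rw [← hlim, mul_div_cancel_left₀ _ (qPochInf_pos hq hx).ne']
  exact (summable_qBinomCoeff_mul_pow hq a hx).hasSum

end QBinomialTheorem

section QGamma

variable {q s : ℝ}

lemma abs_rpow_lt_one (hq0 : 0 < q) (hq1 : q < 1) (hs : 0 < s) : |q ^ s| < 1 := by
  rw [Real.abs_rpow_of_nonneg hq0.le, abs_of_pos hq0]
  exact Real.rpow_lt_one hq0.le hq1 hs

lemma qGamma_pos (hq0 : 0 < q) (hq1 : q < 1) (hs : 0 < s) : 0 < qGamma q s := by
  have hq : |q| < 1 := by rwa [abs_of_pos hq0]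
  exact mul_pos (div_pos (qPochInf_pos hq hq) (qPochInf_pos hq (abs_rpow_lt_one hq0 hq1 hs)))
    (Real.rpow_pos_of_pos (sub_pos.2 hq1) _)

lemma qGamma_one (hq : |q| < 1) : qGamma q 1 = 1 := by
  rw [qGamma, Real.rpow_one, div_self (qPochInf_pos hq hq).ne', sub_self, Real.rpow_zero, mul_one]

lemma inv_qGamma_le (hq0 : 0 < q) (hq1 : q < 1) (hs : 0 < s) :
    (qGamma q s)⁻¹ ≤ (1 - q) ^ (s - 1) / qPochInf q q := by
  have hq : |q| < 1 := by rwa [abs_of_pos hq0]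
  have hle : qPochInf q (q ^ s) ≤ 1 :=
    qPochInf_le_one hq0.le hq1 (Real.rpow_nonneg hq0.le s) (Real.rpow_lt_one hq0.le hq1 hs)
  rw [qGamma, mul_inv, inv_div, ← Real.rpow_neg (sub_pos.2 hq1).le, neg_sub, div_mul_eq_mul_div]
  have hpow : 0 ≤ (1 - q) ^ (s - 1) := Real.rpow_nonneg (sub_pos.2 hq1).le _
  exact div_le_div_of_nonneg_right (mul_le_of_le_one_left hpow hle) (qPochInf_pos hq hq).le

lemma qGamma_div_qGamma_sub (hq0 : 0 < q) (hq1 : q < 1) (α s : ℝ) :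
    qGamma q s / qGamma q (s - α)
      = (1 - q) ^ (-α) * (qPochInf q (q ^ (s - α)) / qPochInf q (q ^ s)) := by
  have hq : |q| < 1 := by rwa [abs_of_pos hq0]
  rw [qGamma, qGamma, mul_div_mul_comm, div_div_div_cancel_left' _ _ (qPochInf_pos hq hq).ne',
    ← Real.rpow_sub (sub_pos.2 hq1), mul_comm]
  ring_nf

end QGamma

section QDerivative

/-- The weights of the `q`-derivative of order `α`, which maps a function `f` of `t` to
`t ^ (-α) * ∑ n, qDiffWeight q α n * q ^ n * f (q ^ n * t)`. The factor `q ^ n` is left out of the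
weights, so that the image of `t ^ (s - 1)` is
`t ^ (s - 1 - α) * ∑ n, qDiffWeight q α n * (q ^ s) ^ n`. -/
noncomputable def qDiffWeight (q α : ℝ) (n : ℕ) : ℝ :=
  (1 - q) ^ (-α) * qBinomCoeff q (q ^ (-α)) n

variable {q α : ℝ}

theorem hasSum_qDiffWeight_mul_rpow_pow {s : ℝ} (hq0 : 0 < q) (hq1 : q < 1) (hs : 0 < s) (α : ℝ) :
    HasSum (fun n => qDiffWeight q α n * (q ^ s) ^ n) (qGamma q s / qGamma q (s - α)) := by
  have hq : |q| < 1 := by rwa [abs_of_pos hq0]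
  have hbinom := (hasSum_qBinomCoeff_mul_pow hq (q ^ (-α)) (abs_rpow_lt_one hq0 hq1 hs)).mul_left
    ((1 - q) ^ (-α))
  rw [← Real.rpow_add hq0, neg_add_eq_sub, ← qGamma_div_qGamma_sub hq0 hq1] at hbinom
  simpa only [qDiffWeight, mul_assoc] using hbinom

lemma qDiffWeight_succ_nonpos (hq0 : 0 < q) (hq1 : q < 1) (hα0 : 0 ≤ α) (hα1 : α ≤ 1) (n : ℕ) :
    qDiffWeight q α (n + 1) ≤ 0 := by
  have hq : |q| < 1 := by rwa [abs_of_pos hq0]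
  have hfirst : 1 - q ^ 0 * q ^ (-α) ≤ 0 := by
    rw [pow_zero, one_mul, sub_nonpos]
    exact Real.one_le_rpow_of_pos_of_le_one_of_nonpos hq0 hq1.le (neg_nonpos.2 hα0)
  have hrest (j : ℕ) : 0 ≤ 1 - q ^ (j + 1) * q ^ (-α) := by
    rw [sub_nonneg, ← Real.rpow_natCast, ← Real.rpow_add hq0]
    refine Real.rpow_le_one hq0.le hq1.le ?_
    push_cast
    linarith [(Nat.cast_nonneg j : (0 : ℝ) ≤ j)]
  have hpoch : qPoch q (q ^ (-α)) (n + 1) ≤ 0 := by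
    rw [qPoch, prod_range_succ']
    exact mul_nonpos_of_nonneg_of_nonpos (prod_nonneg fun j _ => hrest j) hfirst
  exact mul_nonpos_of_nonneg_of_nonpos (Real.rpow_nonneg (sub_pos.2 hq1).le _)
    (div_nonpos_of_nonpos_of_nonneg hpoch (qPoch_pos hq.le hq (n + 1)).le)

end QDerivative

section QMittagLeffler

variable {q α β z : ℝ}

lemma summable_qML (hq0 : 0 < q) (hq1 : q < 1) (hα : 0 ≤ α) (hβ : 0 < β)
    (hz : |z| < (1 - q) ^ (-α)) : Summable fun k : ℕ => z ^ k / qGamma q (α * k + β) := by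
  have h1q : 0 < 1 - q := sub_pos.2 hq1
  have hratio : |z| * (1 - q) ^ α < 1 := by
    rwa [← lt_div_iff₀ (Real.rpow_pos_of_pos h1q α), one_div, ← Real.rpow_neg h1q.le]
  have hgeom := summable_geometric_of_lt_one
    (mul_nonneg (abs_nonneg z) (Real.rpow_nonneg h1q.le α)) hratio
  refine .of_norm_bounded (hgeom.mul_right ((1 - q) ^ (β - 1) / qPochInf q q)) fun k => ?_
  have hs : 0 < α * k + β := by positivity
  rw [div_eq_mul_inv, norm_mul, norm_pow, Real.norm_eq_abs,
    Real.norm_of_nonneg (inv_nonneg.2 (qGamma_pos hq0 hq1 hs).le), mul_pow, mul_assoc]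
  gcongr
  refine (inv_qGamma_le hq0 hq1 hs).trans_eq ?_
  rw [add_sub_assoc, Real.rpow_add h1q, Real.rpow_mul h1q.le, Real.rpow_natCast, mul_div_assoc]

lemma continuousOn_qML (hq0 : 0 < q) (hq1 : q < 1) (hα : 0 ≤ α) (hβ : 0 < β) :
    ContinuousOn (qML q α β) (ball 0 ((1 - q) ^ (-α))) := by
  have hcont := continuousOn_tsum_mul_pow (c := fun k : ℕ => (qGamma q (α * k + β))⁻¹)
    fun x hx => by simpa only [div_eq_inv_mul] using summable_qML hq0 hq1 hα hβ hx
  exact hcont.congr fun x _ => by simp only [qML, div_eq_inv_mul]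

lemma qML_sub (hq0 : 0 < q) (hq1 : q < 1) (hα : 0 ≤ α) (hβ : 0 < β)
    (hz : |z| < (1 - q) ^ (-α)) :
    qML q α (β - α) z = 1 / qGamma q (β - α) + z * qML q α β z := by
  have hshift (k : ℕ) : z ^ (k + 1) / qGamma q (α * (k + 1 : ℕ) + (β - α))
      = z * (z ^ k / qGamma q (α * k + β)) := by
    rw [show α * (k + 1 : ℕ) + (β - α) = α * k + β by push_cast; ring, pow_succ', mul_div_assoc]
  have hsum : Summable fun k : ℕ => z ^ k / qGamma q (α * k + (β - α)) := by
    rw [← summable_nat_add_iff 1]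
    simpa only [hshift] using (summable_qML hq0 hq1 hα hβ hz).mul_left z
  rw [qML, hsum.tsum_eq_zero_add, qML, ← tsum_mul_left]
  simp only [hshift, pow_zero, Nat.cast_zero, mul_zero, zero_add]

theorem hasSum_qDiffWeight_mul_qML (hq0 : 0 < q) (hq1 : q < 1) (hα : 0 ≤ α) (hβ : 0 < β)
    (hz : |z| < (1 - q) ^ (-α)) :
    HasSum (fun n => qDiffWeight q α n * (q ^ β) ^ n * qML q α β ((q ^ α) ^ n * z))
      (qML q α (β - α) z) := by
  have hp : |q ^ α| ≤ 1 := by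
    rw [Real.abs_rpow_of_nonneg hq0.le, abs_of_pos hq0]
    exact Real.rpow_le_one hq0.le hq1.le hα
  have hdil := hasSum_mul_tsum_dilate (c := fun k : ℕ => (qGamma q (α * k + β))⁻¹)
    (hasSum_qDiffWeight_mul_rpow_pow hq0 hq1 hβ α).summable
    (by simpa only [div_eq_inv_mul] using summable_qML hq0 hq1 hα hβ hz) hp
  have hsymbol (k : ℕ) : (qGamma q (α * k + β))⁻¹
      * (∑' n, qDiffWeight q α n * (q ^ β) ^ n * ((q ^ α) ^ k) ^ n) * z ^ k
      = z ^ k / qGamma q (α * k + (β - α)) := by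
    have hs : 0 < α * k + β := by positivity
    have hpow : q ^ (α * k + β) = q ^ β * (q ^ α) ^ k := by
      rw [Real.rpow_add hq0, Real.rpow_mul hq0.le, Real.rpow_natCast, mul_comm]
    have hsum := (hasSum_qDiffWeight_mul_rpow_pow hq0 hq1 hs α).tsum_eq
    simp only [hpow, mul_pow, ← mul_assoc] at hsum
    rw [hsum, ← mul_div_assoc, inv_mul_cancel₀ (qGamma_pos hq0 hq1 hs).ne', add_sub_assoc]
    ring
  simp only [hsymbol] at hdil
  simpa only [qML, div_eq_inv_mul] using hdil

end QMittagLeffler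

lemma div_add_le_of_hasSum_dilate {B : ℕ → ℝ} {f : ℝ → ℝ} {A D p z : ℝ} (hp0 : 0 ≤ p) (hp1 : p ≤ 1)
    (hz : 0 ≤ z) (hA : 0 ≤ A) (hD : 0 < D) (hB : HasSum B D) (hBneg : ∀ n, B (n + 1) ≤ 0)
    (hf : ContinuousOn f (Icc 0 z))
    (heq : ∀ x ∈ Icc 0 z, HasSum (fun n => B n * f (p ^ n * x)) (A - x * f x)) :
    A / (D + z) ≤ f z := by
  obtain ⟨x, hx, hmin⟩ := isCompact_Icc.exists_isMinOn (nonempty_Icc.2 hz) hf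
  have hdil (n : ℕ) : p ^ n * x ∈ Icc 0 z :=
    ⟨mul_nonneg (pow_nonneg hp0 n) hx.1,
      (mul_le_of_le_one_left hx.1 (pow_le_one₀ hp0 hp1)).trans hx.2⟩
  have hcompare : A - x * f x ≤ D * f x := by
    refine hasSum_le (fun n => ?_) (heq x hx) (hB.mul_right (f x))
    rcases n with _ | n
    · rw [pow_zero, one_mul]
    · exact mul_le_mul_of_nonpos_left (hmin (hdil (n + 1))) (hBneg n)
  calc A / (D + z) ≤ A / (D + x) := by
        have := hx.1
        gcongr
        exact hx.2
    _ ≤ f x := by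
        rw [div_le_iff₀ (add_pos_of_pos_of_nonneg hD hx.1)]
        linarith
    _ ≤ f z := hmin (right_mem_Icc.2 hz)

theorem qML_lower_bound_general {q α β z : ℝ} (hq0 : 0 < q) (hq1 : q < 1) (hα0 : 0 ≤ α)
    (hα1 : α ≤ 1) (hβ : α < β) (hz0 : 0 ≤ z) (hz1 : z < (1 - q) ^ (-α)) :
    1 / (qGamma q β + qGamma q (β - α) * z) ≤ qML q α β (-z) := by
  have hβ0 : 0 < β := hα0.trans_lt hβ
  have hΓβ : 0 < qGamma q β := qGamma_pos hq0 hq1 hβ0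
  have hΓ : 0 < qGamma q (β - α) := qGamma_pos hq0 hq1 (sub_pos.2 hβ)
  have hdisc : ∀ x ∈ Icc 0 z, |-x| < (1 - q) ^ (-α) := fun x hx => by
    rw [abs_neg, abs_of_nonneg hx.1]
    exact hx.2.trans_lt hz1
  have hcont : ContinuousOn (fun x => qML q α β (-x)) (Icc 0 z) :=
    (continuousOn_qML hq0 hq1 hα0 hβ0).comp continuous_neg.continuousOn fun x hx =>
      mem_ball_zero_iff.2 (hdisc x hx)
  have hneg (n : ℕ) : qDiffWeight q α (n + 1) * (q ^ β) ^ (n + 1) ≤ 0 :=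
    mul_nonpos_of_nonpos_of_nonneg (qDiffWeight_succ_nonpos hq0 hq1 hα0 hα1 n) (by positivity)
  have hbound := div_add_le_of_hasSum_dilate (Real.rpow_nonneg hq0.le α)
    (Real.rpow_le_one hq0.le hq1.le hα0) hz0 (one_div_pos.2 hΓ).le (div_pos hΓβ hΓ)
    (hasSum_qDiffWeight_mul_rpow_pow hq0 hq1 hβ0 α) hneg hcont fun x hx => by
      have heq := hasSum_qDiffWeight_mul_qML hq0 hq1 hα0 hβ0 (hdisc x hx)
      rw [qML_sub hq0 hq1 hα0 hβ0 (hdisc x hx)] at heq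
      simpa only [mul_neg, neg_mul, ← sub_eq_add_neg] using heq
  convert hbound using 1
  field_simp

theorem qML_lower_bound (q α : ℝ) (hq0 : 0 < q) (hq1 : q < 1)
    (hα0 : 0 < α) (hα1 : α < 1) :
    ∀ z : ℝ, 0 < z → z < (1 - q) ^ (-α) →
      1 / (1 + qGamma q (1 - α) * z) ≤ qML q α 1 (-z) := by
  intro z hz0 hz1
  have hq : |q| < 1 := by rwa [abs_of_pos hq0]
  simpa only [qGamma_one hq] using
    qML_lower_bound_general hq0 hq1 hα0.le hα1.le hα1 hz0.le hz1
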